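/- For every a ∈ {2,…,K} and all N_1, N_a > 0: (i) the function x ↦ N_1·d(μ_1, x) + N_a·d(μ_a, x) attains its minimum over S uniquely at x = x_{1,a}(N_1, N_a) = (N_1μ_1 + N_aμ_a)/(N_1 + N_a), so that W_a(N_1, N_a) = min_{x∈S} (N_1·d(μ_1, x) + N_a·d(μ_a, x)); in particular W_a(N_1, N_a) ≤ min{N_1·d(μ_1, μ_a), N_a·d(μ_a, μ_1)}. (ii) Writing d_2 for the partial derivative of d in its second argument, one has N_1·d_2(μ_1, x_{1,a}) + N_a·d_2(μ_a, x_{1,a}) = 0, and consequently the partial derivatives of W_a satisfy ∂W_a/∂N_1 = d(μ_1, x_{1,a}) and ∂W_a/∂N_a = d(μ_a, x_{1,a}). -/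

import Mathlib

open scoped BigOperators

/-- A single-parameter exponential family, given by the log-partition function `b`,
smooth with positive second derivative on an open interval `Θ`, together with the
inverse `θof` of `b'` on the set of means `S = b'(Θ)`. -/
structure SPEF where
  Θ : Set ℝ
  Θ_isOpen : IsOpen Θ
  Θ_ordConnected : Set.OrdConnected Θ
  Θ_nonempty : Θ.Nonempty
  b : ℝ → ℝ
  b_smooth : ContDiffOn ℝ (⊤ : ℕ∞) b Θ
  b_conv : ∀ t ∈ Θ, 0 < iteratedDeriv 2 b t
  θof : ℝ → ℝ
  θof_mem : ∀ μ ∈ deriv b '' Θ, θof μ ∈ Θ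
  θof_spec : ∀ μ ∈ deriv b '' Θ, deriv b (θof μ) = μ

namespace SPEF

/-- The set of means of the family. -/
def S (F : SPEF) : Set ℝ := deriv F.b '' F.Θ

/-- KL divergence `d(μ, x)` between the members of the family with means `μ` and `x`. -/
noncomputable def d (F : SPEF) (μ x : ℝ) : ℝ :=
  (F.θof μ - F.θof x) * μ - F.b (F.θof μ) + F.b (F.θof x)

end SPEF

/-- A `K`-armed bandit instance with arm distributions in a fixed SPEF; arm `0`
(the paper's arm `1`) is the unique best arm. -/
structure Bandit (K : ℕ) [NeZero K] extends SPEF where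
  two_le : 2 ≤ K
  μ : Fin K → ℝ
  μ_mem : ∀ a, μ a ∈ SPEF.S toSPEF
  μ_best : ∀ a : Fin K, a ≠ 0 → μ a < μ 0

namespace Bandit

variable {K : ℕ} [NeZero K]

/-- KL divergence of the underlying family. -/
noncomputable def d (M : Bandit K) : ℝ → ℝ → ℝ := M.toSPEF.d

/-- The weighted mean `x_{1,a}(N₁, N_a)`. -/
noncomputable def x1 (M : Bandit K) (a : Fin K) (N1 Na : ℝ) : ℝ :=
  (N1 * M.μ 0 + Na * M.μ a) / (N1 + Na)

/-- The index `W_a(N₁, N_a)` of an arm `a ≠ 1`. -/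
noncomputable def W (M : Bandit K) (a : Fin K) (N1 Na : ℝ) : ℝ :=
  N1 * M.d (M.μ 0) (M.x1 a N1 Na) + Na * M.d (M.μ a) (M.x1 a N1 Na)

/-- The set `{2, …, K}` of suboptimal arms. -/
def alt (K : ℕ) [NeZero K] : Finset (Fin K) := Finset.univ.filter (fun a => a ≠ 0)

/-- The anchor function `g(μ, N)`. -/
noncomputable def g (M : Bandit K) (Nv : Fin K → ℝ) : ℝ :=
  (∑ a ∈ alt K, M.d (M.μ 0) (M.x1 a (Nv 0) (Nv a)) / M.d (M.μ a) (M.x1 a (Nv 0) (Nv a))) - 1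

end Bandit

open Bandit

/-- Partial derivative of the KL divergence `d` in its second argument. -/
noncomputable def Bandit.d2 {K : ℕ} [NeZero K] (M : Bandit K) (μv x : ℝ) : ℝ :=
  deriv (fun y => M.d μv y) x

/-!
For weights `wᵢ` with barycenter `z` of the means `pᵢ`, the *compensation identity*
`∑ wᵢ d(pᵢ, x) = ∑ wᵢ d(pᵢ, z) + (∑ wᵢ) d(z, x)` holds, because `d(p, x)` is affine in `p` up to a
term not involving `x`. As `d(z, x) > 0` for `x ≠ z`, the barycenter is the unique minimizer of the
weighted cost. Since `d₂(p, x) = (x - p) / b''(θ_x)`, the weighted sum of the `d₂(pᵢ, z)` vanishes,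
so when the weights vary the motion of `z` contributes nothing to the derivative of the minimum.
-/

theorem add_mul_sub_lt_of_strictConvexOn {D : Set ℝ} {f : ℝ → ℝ} {f' x y : ℝ}
    (hf : StrictConvexOn ℝ D f) (hx : x ∈ D) (hy : y ∈ D) (hne : y ≠ x)
    (hf' : HasDerivAt f f' x) : f x + f' * (y - x) < f y := by
  rcases hne.lt_or_gt with hlt | hlt
  · have hslope := hf.slope_lt_of_hasDerivAt hy hx hlt hf'
    rw [slope_def_field, div_lt_iff₀ (sub_pos.2 hlt)] at hslope
    linarith
  · have hslope := hf.lt_slope_of_hasDerivAt hx hy hlt hf'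
    rw [slope_def_field, lt_div_iff₀ (sub_pos.2 hlt)] at hslope
    linarith

theorem sum_smul_centerMass {R E ι : Type*} [Field R] [AddCommGroup E] [Module R E]
    {s : Finset ι} {w : ι → R} (hw : ∑ i ∈ s, w i ≠ 0) (p : ι → E) :
    (∑ i ∈ s, w i) • s.centerMass w p = ∑ i ∈ s, w i • p i :=
  smul_inv_smul₀ hw _

theorem differentiableAt_centerMass {𝕜 E G ι : Type*} [NontriviallyNormedField 𝕜]
    [NormedAddCommGroup E] [NormedSpace 𝕜 E] [NormedAddCommGroup G] [NormedSpace 𝕜 G]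
    {s : Finset ι} {w : G → ι → 𝕜} {t : G}
    (hw : ∀ i ∈ s, DifferentiableAt 𝕜 (fun r => w r i) t) (hsum : ∑ i ∈ s, w t i ≠ 0)
    (p : ι → E) : DifferentiableAt 𝕜 (fun r => s.centerMass (w r) p) t :=
  ((DifferentiableAt.fun_sum hw).inv hsum).smul
    (DifferentiableAt.fun_sum fun i hi => (hw i hi).smul_const (p i))

theorem update_pair_zero {α : Type*} (x y z : α) : Function.update ![x, y] 0 z = ![z, y] := by
  ext i
  fin_cases i <;> rfl

theorem update_pair_one {α : Type*} (x y z : α) : Function.update ![x, y] 1 z = ![x, z] := by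
  ext i
  fin_cases i <;> rfl

namespace SPEF

section Family

variable (F : SPEF)

theorem hasDerivAt_b {t : ℝ} (ht : t ∈ F.Θ) : HasDerivAt F.b (deriv F.b t) t :=
  ((F.b_smooth.differentiableOn (by simp)).differentiableAt
    (F.Θ_isOpen.mem_nhds ht)).hasDerivAt

theorem hasStrictDerivAt_deriv_b {t : ℝ} (ht : t ∈ F.Θ) :
    HasStrictDerivAt (deriv F.b) (iteratedDeriv 2 F.b t) t := by
  have hsmooth : ContDiffOn ℝ 1 (deriv F.b) F.Θ :=
    F.b_smooth.deriv_of_isOpen F.Θ_isOpen (by norm_cast)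
  rw [iteratedDeriv_succ, iteratedDeriv_one]
  exact (hsmooth.contDiffAt (F.Θ_isOpen.mem_nhds ht)).hasStrictDerivAt one_ne_zero

theorem continuousOn_deriv_b : ContinuousOn (deriv F.b) F.Θ := fun _ ht =>
  (F.hasStrictDerivAt_deriv_b ht).hasDerivAt.continuousAt.continuousWithinAt

theorem strictMonoOn_deriv_b : StrictMonoOn (deriv F.b) F.Θ := by
  refine strictMonoOn_of_deriv_pos F.Θ_ordConnected.convex F.continuousOn_deriv_b fun t ht => ?_
  have htΘ := interior_subset ht
  rw [(F.hasStrictDerivAt_deriv_b htΘ).hasDerivAt.deriv]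
  exact F.b_conv t htΘ

theorem strictConvexOn_b : StrictConvexOn ℝ F.Θ F.b :=
  StrictMonoOn.strictConvexOn_of_deriv F.Θ_ordConnected.convex F.b_smooth.continuousOn
    (F.strictMonoOn_deriv_b.mono interior_subset)

theorem θof_deriv_b {t : ℝ} (ht : t ∈ F.Θ) : F.θof (deriv F.b t) = t :=
  F.strictMonoOn_deriv_b.injOn (F.θof_mem _ ⟨t, ht, rfl⟩) ht (F.θof_spec _ ⟨t, ht, rfl⟩)

theorem injOn_θof : Set.InjOn F.θof F.S :=
  Set.LeftInvOn.injOn F.θof_spec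

theorem convex_S : Convex ℝ F.S :=
  (F.Θ_ordConnected.isPreconnected.image _ F.continuousOn_deriv_b).ordConnected.convex

theorem hasDerivAt_b_θof {x : ℝ} (hx : x ∈ F.S) : HasDerivAt F.b x (F.θof x) := by
  simpa only [F.θof_spec x hx] using F.hasDerivAt_b (F.θof_mem x hx)

theorem hasDerivAt_θof {x : ℝ} (hx : x ∈ F.S) :
    HasDerivAt F.θof (iteratedDeriv 2 F.b (F.θof x))⁻¹ x := by
  have hmem := F.θof_mem x hx
  have hinv := (F.hasStrictDerivAt_deriv_b hmem).to_local_left_inverse (F.b_conv _ hmem).ne'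
    (Filter.eventually_of_mem (F.Θ_isOpen.mem_nhds hmem) fun _ ht => F.θof_deriv_b ht)
  rw [F.θof_spec x hx] at hinv
  exact hinv.hasDerivAt

theorem hasDerivAt_d (μ : ℝ) {x : ℝ} (hx : x ∈ F.S) :
    HasDerivAt (F.d μ) ((x - μ) / iteratedDeriv 2 F.b (F.θof x)) x := by
  have hθ := F.hasDerivAt_θof hx
  have hb := (F.hasDerivAt_b_θof hx).comp x hθ
  exact ((((hθ.const_sub (F.θof μ)).mul_const μ).sub_const (F.b (F.θof μ))).add hb).congr_deriv
    (by ring)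

theorem d_self (μ : ℝ) : F.d μ μ = 0 := by
  simp [d]

theorem d_pos {μ x : ℝ} (hμ : μ ∈ F.S) (hx : x ∈ F.S) (hne : x ≠ μ) : 0 < F.d μ x := by
  have htangent := add_mul_sub_lt_of_strictConvexOn F.strictConvexOn_b (F.θof_mem μ hμ)
    (F.θof_mem x hx) (F.injOn_θof.ne hx hμ hne) (F.hasDerivAt_b_θof hμ)
  unfold d
  linarith

end Family

section WeightedCost

variable {ι : Type*}

/-- The weighted KL cost `x ↦ ∑ i ∈ s, wᵢ d(pᵢ, x)` of a finite family of means `p` with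
weights `w`. Its minimum over the set of means generalizes the index `W_a`, which is the case of
two means. -/
noncomputable def klCost (F : SPEF) (s : Finset ι) (w p : ι → ℝ) (x : ℝ) : ℝ :=
  ∑ i ∈ s, w i * F.d (p i) x

theorem klCost_pair (F : SPEF) (m n p q x : ℝ) :
    F.klCost Finset.univ ![m, n] ![p, q] x = m * F.d p x + n * F.d q x := by
  simp [klCost]

theorem klCost_single [DecidableEq ι] (F : SPEF) {s : Finset ι} {j : ι} (hj : j ∈ s) (p : ι → ℝ)
    (x : ℝ) : F.klCost s (Pi.single j 1) p x = F.d (p j) x := by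
  simp [klCost, Pi.single_apply, hj]

variable (F : SPEF) {s : Finset ι} {w p : ι → ℝ}

theorem klCost_eq_klCost_centerMass_add (hsum : ∑ i ∈ s, w i ≠ 0) (x : ℝ) :
    F.klCost s w p x = F.klCost s w p (s.centerMass w p) +
      (∑ i ∈ s, w i) * F.d (s.centerMass w p) x := by
  have hz := sum_smul_centerMass hsum p
  set z := s.centerMass w p
  have hterm (i : ι) : w i * F.d (p i) x = w i * F.d (p i) z +
      ((F.θof z - F.θof x) * (w i • p i) + w i * (F.b (F.θof x) - F.b (F.θof z))) := by
    simp only [d, smul_eq_mul]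
    ring
  simp only [klCost, hterm, Finset.sum_add_distrib, ← Finset.mul_sum, ← Finset.sum_mul, ← hz]
  simp only [d, smul_eq_mul]
  ring

theorem klCost_centerMass_lt (hsum : 0 < ∑ i ∈ s, w i) (hz : s.centerMass w p ∈ F.S) {x : ℝ}
    (hx : x ∈ F.S) (hne : x ≠ s.centerMass w p) :
    F.klCost s w p (s.centerMass w p) < F.klCost s w p x := by
  rw [F.klCost_eq_klCost_centerMass_add hsum.ne' x]
  exact lt_add_of_pos_right _ (mul_pos hsum (F.d_pos hz hx hne))

theorem klCost_centerMass_le (hsum : 0 < ∑ i ∈ s, w i) (hz : s.centerMass w p ∈ F.S) {x : ℝ}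
    (hx : x ∈ F.S) : F.klCost s w p (s.centerMass w p) ≤ F.klCost s w p x := by
  rcases eq_or_ne x (s.centerMass w p) with rfl | hne
  · rfl
  · exact (F.klCost_centerMass_lt hsum hz hx hne).le

theorem sum_mul_deriv_d_centerMass (hsum : ∑ i ∈ s, w i ≠ 0) (hz : s.centerMass w p ∈ F.S) :
    ∑ i ∈ s, w i * deriv (F.d (p i)) (s.centerMass w p) = 0 := by
  have hbary := sum_smul_centerMass hsum p
  simp only [(F.hasDerivAt_d _ hz).deriv, mul_div_assoc', mul_sub, ← Finset.sum_div,
    Finset.sum_sub_distrib, ← Finset.sum_mul]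
  simp only [smul_eq_mul] at hbary
  rw [hbary, sub_self, zero_div]

theorem hasDerivAt_klCost_centerMass {v : ℝ → ι → ℝ} {v' : ι → ℝ} {t : ℝ}
    (hv : ∀ i ∈ s, HasDerivAt (fun r => v r i) (v' i) t) (hsum : ∑ i ∈ s, v t i ≠ 0)
    (hz : s.centerMass (v t) p ∈ F.S) :
    HasDerivAt (fun r => F.klCost s (v r) p (s.centerMass (v r) p))
      (F.klCost s v' p (s.centerMass (v t) p)) t := by
  have hcenter := (differentiableAt_centerMass
    (fun i hi => (hv i hi).differentiableAt) hsum p).hasDerivAt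
  have hd (i : ι) := (F.hasDerivAt_d (p i) hz).differentiableAt.hasDerivAt.comp t hcenter
  refine (HasDerivAt.fun_sum fun i hi => (hv i hi).mul (hd i)).congr_deriv ?_
  have hfirst_order := F.sum_mul_deriv_d_centerMass hsum hz
  simp only [Function.comp_apply, Finset.sum_add_distrib, ← mul_assoc, ← Finset.sum_mul,
    hfirst_order, zero_mul, add_zero, klCost]

theorem hasDerivAt_klCost_centerMass_update [DecidableEq ι] {j : ι} (hj : j ∈ s)
    (hsum : ∑ i ∈ s, w i ≠ 0) (hz : s.centerMass w p ∈ F.S) :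
    HasDerivAt (fun t => F.klCost s (Function.update w j t) p
        (s.centerMass (Function.update w j t) p))
      (F.d (p j) (s.centerMass w p)) (w j) := by
  have hupdate (i : ι) : HasDerivAt (fun t => Function.update w j t i)
      ((Pi.single j 1 : ι → ℝ) i) (w j) := by
    rcases eq_or_ne i j with rfl | hne
    · simpa using hasDerivAt_id' (w i)
    · simpa [hne] using hasDerivAt_const (w j) (w i)
  simpa only [Function.update_eq_self, F.klCost_single hj] using
    F.hasDerivAt_klCost_centerMass (s := s) (p := p) (fun i _ => hupdate i)
      (by rwa [Function.update_eq_self]) (by rwa [Function.update_eq_self])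

end WeightedCost

end SPEF

namespace Bandit

variable {K : ℕ} [NeZero K] (M : Bandit K) (a : Fin K) (N1 Na : ℝ)

theorem x1_eq_centerMass :
    M.x1 a N1 Na = Finset.univ.centerMass ![N1, Na] ![M.μ 0, M.μ a] := by
  simp [x1, Finset.centerMass, div_eq_inv_mul]

end Bandit

theorem statement_3_general {ι : Type*} [DecidableEq ι] (F : SPEF) (s : Finset ι) (w p : ι → ℝ)
    (hw : ∀ i ∈ s, 0 ≤ w i) (hsum : 0 < ∑ i ∈ s, w i) (hp : ∀ i ∈ s, p i ∈ F.S) :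
    (s.centerMass w p ∈ F.S ∧
      (∀ x ∈ F.S, F.klCost s w p (s.centerMass w p) ≤ F.klCost s w p x) ∧
      (∀ x ∈ F.S, F.klCost s w p x = F.klCost s w p (s.centerMass w p) →
        x = s.centerMass w p) ∧
      ∀ j ∈ s, F.klCost s w p (s.centerMass w p) ≤ F.klCost s w p (p j)) ∧
    (∑ i ∈ s, w i * deriv (F.d (p i)) (s.centerMass w p) = 0 ∧
      ∀ j ∈ s, HasDerivAt
        (fun t => F.klCost s (Function.update w j t) p
          (s.centerMass (Function.update w j t) p))
        (F.d (p j) (s.centerMass w p)) (w j)) := by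
  have hz : s.centerMass w p ∈ F.S := F.convex_S.centerMass_mem hw hsum hp
  refine ⟨⟨hz, fun x hx => F.klCost_centerMass_le hsum hz hx, fun x hx heq => ?_,
    fun j hj => F.klCost_centerMass_le hsum hz (hp j hj)⟩,
    F.sum_mul_deriv_d_centerMass hsum.ne' hz,
    fun j hj => F.hasDerivAt_klCost_centerMass_update hj hsum.ne' hz⟩
  by_contra hne
  exact (F.klCost_centerMass_lt hsum hz hx hne).ne' heq

/-- `x_{1,a}` is the unique minimizer of the weighted KL cost over `S`,
the first-order condition in the second argument, and the partial derivatives of `W_a`. -/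
theorem statement_3 {K : ℕ} [NeZero K] (M : Bandit K) (a : Fin K) (ha : a ∈ alt K)
    (N1 Na : ℝ) (hN1 : 0 < N1) (hNa : 0 < Na) :
    -- (i) unique minimizer and value
    (M.x1 a N1 Na ∈ SPEF.S M.toSPEF ∧
      (∀ x ∈ SPEF.S M.toSPEF,
        N1 * M.d (M.μ 0) (M.x1 a N1 Na) + Na * M.d (M.μ a) (M.x1 a N1 Na) ≤
          N1 * M.d (M.μ 0) x + Na * M.d (M.μ a) x) ∧
      (∀ x ∈ SPEF.S M.toSPEF,
        N1 * M.d (M.μ 0) x + Na * M.d (M.μ a) x =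
          N1 * M.d (M.μ 0) (M.x1 a N1 Na) + Na * M.d (M.μ a) (M.x1 a N1 Na) →
        x = M.x1 a N1 Na) ∧
      M.W a N1 Na ≤ min (N1 * M.d (M.μ 0) (M.μ a)) (Na * M.d (M.μ a) (M.μ 0))) ∧
    -- (ii) first-order condition and partial derivatives of `W_a`
    (N1 * M.d2 (M.μ 0) (M.x1 a N1 Na) + Na * M.d2 (M.μ a) (M.x1 a N1 Na) = 0 ∧
      HasDerivAt (fun t => M.W a t Na) (M.d (M.μ 0) (M.x1 a N1 Na)) N1 ∧
      HasDerivAt (fun t => M.W a N1 t) (M.d (M.μ a) (M.x1 a N1 Na)) Na) := by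
  rw [min_comm]
  simpa [x1_eq_centerMass, W, Bandit.d, d2, SPEF.klCost_pair, SPEF.d_self,
    Fin.forall_fin_two, update_pair_zero, update_pair_one] using
    statement_3_general M.toSPEF Finset.univ ![N1, Na] ![M.μ 0, M.μ a]
      (by simp [Fin.forall_fin_two, hN1.le, hNa.le]) (by simpa using add_pos hN1 hNa)
      (by simp [Fin.forall_fin_two, M.μ_mem])
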